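/- (Pathwise matching of reflected local times, equation (2.54).) Let z₊, z₋ : [0,∞) → ℝ be continuous with z₊(0) = z₋(0) = 0, and let z : [0,∞) → ℝ be a continuous function satisfying z(θ) = z₊(P₊^z(θ)) − z₋(P₋^z(θ)) for all θ ≥ 0, where P₊^z(θ) := ∫₀^θ 1{z(τ) > 0} dτ and P₋^z(θ) := ∫₀^θ 1{z(τ) < 0} dτ. Then Γ(z₊)(P₊^z(θ)) = Γ(z₋)(P₋^z(θ)) for all θ ≥ 0. -/

import Mathlib

open Set Filter MeasureTheory

/-- The Skorohod map: `Γ(w)(θ) = max(0, sup_{0 ≤ ν ≤ θ} (−w(ν)))`. -/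
noncomputable def skorohod (w : ℝ → ℝ) (θ : ℝ) : ℝ :=
  max 0 (sSup ((fun ν => -w ν) '' Set.Icc 0 θ))

/-- Occupation time of the positive half-line: `P₊^z(θ) = ∫₀^θ 1{z(τ) > 0} dτ`. -/
noncomputable def occPos (f : ℝ → ℝ) (t : ℝ) : ℝ :=
  ∫ s in (0:ℝ)..t, Set.indicator {u : ℝ | 0 < f u} (fun _ => (1:ℝ)) s

/-- Occupation time of the negative half-line: `P₋^z(θ) = ∫₀^θ 1{z(τ) < 0} dτ`. -/
noncomputable def occNeg (f : ℝ → ℝ) (t : ℝ) : ℝ :=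
  ∫ s in (0:ℝ)..t, Set.indicator {u : ℝ | f u < 0} (fun _ => (1:ℝ)) s

/-!
Every level `ν ≤ P₊(θ)` of the positive clock is attained at a time `r ≤ θ` with `z r ≥ 0`: take
any time `s` with `P₊(s) = ν` and let `r` be the last time before `s` at which `z` is nonnegative;
after `r` the clock stands still. At `r` the representation of `z` gives `z₋(P₋(r)) ≤ z₊(ν)`, so
each value of `-z₊` on `[0, P₊(θ)]` is dominated by a value of `-z₋` on `[0, P₋(θ)]`, whence
`Γ(z₊)(P₊(θ)) ≤ Γ(z₋)(P₋(θ))`. The reverse inequality is the same one for the path `-z`, for which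
the roles of `z₊` and `z₋` are exchanged.
-/

theorem exists_mem_Icc_le_forall_Ioc_lt {α β : Type*} [TopologicalSpace α]
    [ConditionallyCompleteLinearOrder α] [OrderTopology α] [TopologicalSpace β] [LinearOrder β]
    [OrderClosedTopology β] {f : α → β} {a b : α} {c : β} (hab : a ≤ b)
    (hf : ContinuousOn f (Icc a b)) (hc : c ≤ f a) :
    ∃ r ∈ Icc a b, c ≤ f r ∧ ∀ u ∈ Ioc r b, f u < c := by
  have hclosed : IsClosed (Icc a b ∩ f ⁻¹' Ici c) :=
    hf.preimage_isClosed_of_isClosed isClosed_Icc isClosed_Ici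
  have hcompact : IsCompact (Icc a b ∩ f ⁻¹' Ici c) :=
    isCompact_Icc.of_isClosed_subset hclosed inter_subset_left
  obtain ⟨r, ⟨hr, hcr⟩, hmax⟩ := hcompact.exists_isGreatest ⟨a, left_mem_Icc.2 hab, hc⟩
  refine ⟨r, hr, hcr, fun u hu => ?_⟩
  by_contra! hcu
  exact hu.1.not_ge (hmax ⟨⟨hr.1.trans hu.1.le, hu.2⟩, hcu⟩)

theorem skorohod_le_skorohod {v w : ℝ → ℝ} {a b : ℝ} (hw : BddBelow (w '' Icc 0 b))
    (h : ∀ ν ∈ Icc 0 a, ∃ μ ∈ Icc 0 b, w μ ≤ v ν) : skorohod v a ≤ skorohod w b := by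
  have hbdd : BddAbove ((fun μ => -w μ) '' Icc 0 b) := by
    simpa only [← image_neg_eq_neg, image_image] using hw.neg
  refine max_le (le_max_left _ _) (Real.sSup_le ?_ (le_max_left _ _))
  rintro _ ⟨ν, hν, rfl⟩
  obtain ⟨μ, hμ, hle⟩ := h ν hν
  exact (neg_le_neg hle).trans <| (le_csSup hbdd (mem_image_of_mem _ hμ)).trans (le_max_right _ _)

section OccupationTime

variable {f : ℝ → ℝ} {r s t : ℝ}

theorem occNeg_eq_occPos_neg (f : ℝ → ℝ) : occNeg f = occPos (-f) := by
  funext t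
  simp only [occNeg, occPos, Pi.neg_apply, neg_pos]

theorem occPos_zero (f : ℝ → ℝ) : occPos f 0 = 0 :=
  intervalIntegral.integral_same

theorem integrableOn_indicator_pos {A : Set ℝ} (hA : volume A ≠ ⊤)
    (hf : AEMeasurable f (volume.restrict A)) :
    IntegrableOn (indicator {u | 0 < f u} fun _ => (1 : ℝ)) A :=
  (integrableOn_const hA).indicator₀ (nullMeasurableSet_lt aemeasurable_const hf)

theorem monotoneOn_occPos (hf : AEMeasurable f (volume.restrict (Icc 0 t))) :
    MonotoneOn (occPos f) (Icc 0 t) := by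
  intro r hr s hs hrs
  have hint : IntegrableOn (indicator {u | 0 < f u} fun _ => (1 : ℝ)) (Ioc 0 s) :=
    (integrableOn_indicator_pos measure_Icc_lt_top.ne hf).mono_set
      (Ioc_subset_Icc_self.trans (Icc_subset_Icc_right hs.2))
  exact intervalIntegral.integral_mono_interval le_rfl hr.1 hrs
    (Eventually.of_forall (indicator_nonneg fun _ _ => zero_le_one))
    ((intervalIntegrable_iff_integrableOn_Ioc_of_le hs.1).2 hint)

theorem continuousOn_occPos (hf : AEMeasurable f (volume.restrict (Icc 0 t))) :
    ContinuousOn (occPos f) (Icc 0 t) := by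
  rcases le_total 0 t with ht | ht
  · rw [← uIcc_of_le ht] at hf ⊢
    exact intervalIntegral.continuousOn_primitive_interval
      (integrableOn_indicator_pos measure_Icc_lt_top.ne hf)
  · exact (subsingleton_Icc_of_ge ht).continuousOn _

theorem occPos_eq_of_forall_nonpos (hr : 0 ≤ r) (hrs : r ≤ s) (hf : ∀ u ∈ Ioc r s, f u ≤ 0) :
    occPos f s = occPos f r := by
  rw [occPos, occPos, intervalIntegral.integral_of_le (hr.trans hrs),
    intervalIntegral.integral_of_le hr]
  refine setIntegral_eq_of_subset_of_forall_sdiff_eq_zero measurableSet_Ioc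
    (Ioc_subset_Ioc_right hrs) fun u hu => indicator_of_notMem ?_ _
  have hru : r < u := not_le.1 fun hur => hu.2 ⟨hu.1.1, hur⟩
  exact (hf u ⟨hru, hu.1.2⟩).not_gt

theorem exists_nonneg_occPos_eq (ht : 0 ≤ t) (hf : ContinuousOn f (Icc 0 t)) (hf0 : 0 ≤ f 0)
    {ν : ℝ} (hν : ν ∈ Icc 0 (occPos f t)) : ∃ r ∈ Icc 0 t, 0 ≤ f r ∧ occPos f r = ν := by
  have hcont : ContinuousOn (occPos f) (Icc 0 t) :=
    continuousOn_occPos (hf.aemeasurable measurableSet_Icc)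
  obtain ⟨s, hs, rfl⟩ : ν ∈ occPos f '' Icc 0 t :=
    intermediate_value_Icc ht hcont (by rwa [occPos_zero])
  obtain ⟨r, hr, hfr, hneg⟩ :=
    exists_mem_Icc_le_forall_Ioc_lt hs.1 (hf.mono (Icc_subset_Icc_right hs.2)) hf0
  exact ⟨r, ⟨hr.1, hr.2.trans hs.2⟩, hfr,
    (occPos_eq_of_forall_nonpos hr.1 hr.2 fun u hu => (hneg u hu).le).symm⟩

theorem occNeg_mem_Icc (hf : AEMeasurable f (volume.restrict (Icc 0 t))) (hr : r ∈ Icc 0 t) :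
    occNeg f r ∈ Icc 0 (occNeg f t) := by
  have hmono : MonotoneOn (occNeg f) (Icc 0 t) :=
    occNeg_eq_occPos_neg f ▸ monotoneOn_occPos hf.neg
  have hzero : occNeg f 0 = 0 := by rw [occNeg_eq_occPos_neg, occPos_zero]
  have ht : 0 ≤ t := hr.1.trans hr.2
  exact ⟨hzero ▸ hmono (left_mem_Icc.2 ht) hr hr.1, hmono hr (right_mem_Icc.2 ht) hr.2⟩

end OccupationTime

theorem skorohod_occPos_le_skorohod_occNeg {zp zm z : ℝ → ℝ} {θ : ℝ} (hθ : 0 ≤ θ)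
    (hz : ContinuousOn z (Icc 0 θ)) (hz0 : 0 ≤ z 0)
    (hzm : BddBelow (zm '' Icc 0 (occNeg z θ)))
    (hrep : ∀ s ∈ Icc 0 θ, z s ≤ zp (occPos z s) - zm (occNeg z s)) :
    skorohod zp (occPos z θ) ≤ skorohod zm (occNeg z θ) := by
  refine skorohod_le_skorohod hzm fun ν hν => ?_
  obtain ⟨r, hr, hzr, rfl⟩ := exists_nonneg_occPos_eq hθ hz hz0 hν
  have hmem : occNeg z r ∈ Icc 0 (occNeg z θ) :=
    occNeg_mem_Icc (hz.aemeasurable measurableSet_Icc) hr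
  exact ⟨occNeg z r, hmem, sub_nonneg.1 (hzr.trans (hrep r hr))⟩

theorem matching_reflected_local_times_general {zp zm z : ℝ → ℝ} {θ : ℝ} (hθ : 0 ≤ θ)
    (hzp : BddBelow (zp '' Icc 0 (occPos z θ))) (hzm : BddBelow (zm '' Icc 0 (occNeg z θ)))
    (hz : ContinuousOn z (Icc 0 θ)) (h0 : zp 0 = zm 0)
    (hrep : ∀ s ∈ Icc 0 θ, z s = zp (occPos z s) - zm (occNeg z s)) :
    skorohod zp (occPos z θ) = skorohod zm (occNeg z θ) := by
  have hz0 : z 0 = 0 := by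
    rw [hrep 0 (left_mem_Icc.2 hθ), occNeg_eq_occPos_neg, occPos_zero, occPos_zero, h0, sub_self]
  have hpos : occPos z = occNeg (-z) := by rw [occNeg_eq_occPos_neg, neg_neg]
  have hneg : occNeg z = occPos (-z) := occNeg_eq_occPos_neg z
  have hrep_neg : ∀ s ∈ Icc 0 θ, (-z) s = zm (occPos (-z) s) - zp (occNeg (-z) s) := by
    intro s hs
    rw [Pi.neg_apply, hrep s hs, neg_sub, hpos, hneg]
  refine le_antisymm
    (skorohod_occPos_le_skorohod_occNeg hθ hz hz0.ge hzm fun s hs => (hrep s hs).le) ?_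
  rw [hpos] at hzp ⊢
  rw [hneg]
  exact skorohod_occPos_le_skorohod_occNeg hθ hz.neg (by simp [hz0]) hzp
    fun s hs => (hrep_neg s hs).le

/-- Pathwise matching of reflected local times (equation (2.54)): if a continuous path
`z` satisfies `z(θ) = z₊(P₊^z(θ)) − z₋(P₋^z(θ))` for all `θ ≥ 0`, then
`Γ(z₊)(P₊^z(θ)) = Γ(z₋)(P₋^z(θ))` for all `θ ≥ 0`. -/
theorem matching_reflected_local_times
    (zp zm z : ℝ → ℝ)
    (hzp : ContinuousOn zp (Set.Ici 0)) (hzm : ContinuousOn zm (Set.Ici 0))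
    (hz : ContinuousOn z (Set.Ici 0))
    (hzp0 : zp 0 = 0) (hzm0 : zm 0 = 0)
    (hrep : ∀ θ ∈ Set.Ici (0:ℝ), z θ = zp (occPos z θ) - zm (occNeg z θ)) :
    ∀ θ ∈ Set.Ici (0:ℝ), skorohod zp (occPos z θ) = skorohod zm (occNeg z θ) := by
  intro θ hθ
  exact matching_reflected_local_times_general hθ
    (isCompact_Icc.bddBelow_image (hzp.mono Icc_subset_Ici_self))
    (isCompact_Icc.bddBelow_image (hzm.mono Icc_subset_Ici_self))
    (hz.mono Icc_subset_Ici_self) (hzp0.trans hzm0.symm) fun s hs => hrep s hs.1
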